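/- An element A ∈ SL(n,ℍ) satisfies gAg⁻¹ = −A⁻¹ for some g ∈ SL(n,ℍ) if and only if A is conjugate in GL(n,ℍ) to a block-diagonal matrix that is a direct sum of blocks of the following two kinds: pairs J(λ,s) ⊕ J(−λ⁻¹,s) with λ ∈ ℂ \ {0}, Im(λ) ≥ 0 and λ ≠ i, and single blocks J(i,t). -/

import Mathlib

set_option maxHeartbeats 1000000

noncomputable section

open Matrix

/-- The embedding of `ℂ` into the real quaternions, onto the subalgebra spanned by `1` and `i`. -/
def C2H (z : ℂ) : Quaternion ℝ := ⟨z.re, z.im, 0, 0⟩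

/-- For a quaternion `q = a + b i + c j + d k`, its first complex coordinate `a + b i`. -/
def qc1 (q : Quaternion ℝ) : ℂ := ⟨q.re, q.imI⟩

/-- For a quaternion `q = a + b i + c j + d k`, its second complex coordinate `c + d i`,
so that `q = qc1 q + (qc2 q) * j`. -/
def qc2 (q : Quaternion ℝ) : ℂ := ⟨q.imJ, q.imK⟩

/-- The embedding `Φ` of quaternionic square matrices into complex matrices of doubled size:
writing `A = A₁ + A₂ · j`, `Φ A` is the block matrix `[[A₁, A₂], [-conj A₂, conj A₁]]`. -/
def Phi {m : Type*} (A : Matrix m m (Quaternion ℝ)) : Matrix (m ⊕ m) (m ⊕ m) ℂ :=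
  Matrix.fromBlocks (A.map qc1) (A.map qc2)
    (-(A.map fun q => (starRingEnd ℂ) (qc2 q))) (A.map fun q => (starRingEnd ℂ) (qc1 q))

/-- The determinant of a quaternionic matrix `A`: the determinant of `Φ A`.
`A ∈ GL(n, ℍ)` means `qdet A ≠ 0`, and `A ∈ SL(n, ℍ)` means `qdet A = 1`. -/
def qdet {m : Type*} [Fintype m] [DecidableEq m] (A : Matrix m m (Quaternion ℝ)) : ℂ :=
  (Phi A).det

/-- The `m × m` Jordan block `J(λ, m)` over `ℂ`: `λ` on the diagonal, `1` on the
superdiagonal, `0` elsewhere. -/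
def jordanC (lam : ℂ) (m : ℕ) : Matrix (Fin m) (Fin m) ℂ :=
  Matrix.of fun i j => if (j : ℕ) = (i : ℕ) then lam else if (j : ℕ) = (i : ℕ) + 1 then 1 else 0

/-- The `m × m` Jordan block `J(λ, m)`, `λ ∈ ℂ`, viewed as a quaternionic matrix. -/
def jordanH (lam : ℂ) (m : ℕ) : Matrix (Fin m) (Fin m) (Quaternion ℝ) :=
  (jordanC lam m).map C2H

/-- The direct sum (block-diagonal juxtaposition) of a list of square complex matrices. -/
def dsum : List ((m : ℕ) × Matrix (Fin m) (Fin m) ℂ) → (k : ℕ) × Matrix (Fin k) (Fin k) ℂ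
  | [] => ⟨0, 0⟩
  | ⟨m, M⟩ :: L =>
    ⟨m + (dsum L).1,
      Matrix.reindex finSumFinEquiv finSumFinEquiv (Matrix.fromBlocks M 0 0 (dsum L).2)⟩

/-! ### A relation between complex matrices -/

/-- The first matrix is conjugate to minus the inverse of the second one. -/
def NRel {ι κ : Type*} [Fintype ι] [Fintype κ] [DecidableEq ι] [DecidableEq κ]
    (M : Matrix ι ι ℂ) (M' : Matrix κ κ ℂ) : Prop :=
  ∃ (h : Matrix ι κ ℂ) (h' : Matrix κ ι ℂ), h * h' = 1 ∧ h' * h = 1 ∧ M * h * M' = -h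

lemma NRel.reindex {ι κ ι' κ' : Type*} [Fintype ι] [Fintype κ] [DecidableEq ι] [DecidableEq κ]
    [Fintype ι'] [Fintype κ'] [DecidableEq ι'] [DecidableEq κ']
    {M : Matrix ι ι ℂ} {M' : Matrix κ κ ℂ} (H : NRel M M') (e : ι ≃ ι') (e' : κ ≃ κ') :
    NRel (Matrix.reindex e e M) (Matrix.reindex e' e' M') := by
  obtain ⟨h, h', h1, h2, h3⟩ := H
  refine ⟨h.submatrix e.symm e'.symm, h'.submatrix e'.symm e.symm, ?_, ?_, ?_⟩
  · rw [Matrix.submatrix_mul_equiv, h1, Matrix.submatrix_one_equiv]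
  · rw [Matrix.submatrix_mul_equiv, h2, Matrix.submatrix_one_equiv]
  · simp only [Matrix.reindex_apply]
    rw [Matrix.submatrix_mul_equiv, Matrix.submatrix_mul_equiv, h3]
    rfl

lemma NRel.blocks {ι κ ι' κ' : Type*} [Fintype ι] [Fintype κ] [DecidableEq ι] [DecidableEq κ]
    [Fintype ι'] [Fintype κ'] [DecidableEq ι'] [DecidableEq κ']
    {M : Matrix ι ι ℂ} {M' : Matrix κ κ ℂ} {N : Matrix ι' ι' ℂ} {N' : Matrix κ' κ' ℂ}
    (H : NRel M M') (K : NRel N N') :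
    NRel (Matrix.fromBlocks M 0 0 N) (Matrix.fromBlocks M' 0 0 N') := by
  obtain ⟨h, h', h1, h2, h3⟩ := H
  obtain ⟨k, k', k1, k2, k3⟩ := K
  refine ⟨Matrix.fromBlocks h 0 0 k, Matrix.fromBlocks h' 0 0 k', ?_, ?_, ?_⟩
  · simp [Matrix.fromBlocks_multiply, h1, k1]
  · simp [Matrix.fromBlocks_multiply, h2, k2]
  · simp [Matrix.fromBlocks_multiply, h3, k3, Matrix.fromBlocks_neg]

lemma NRel.pair {ι κ : Type*} [Fintype ι] [Fintype κ] [DecidableEq ι] [DecidableEq κ]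
    {M : Matrix ι ι ℂ} {N : Matrix κ κ ℂ} (H : NRel M N) (K : NRel N M) :
    NRel (Matrix.fromBlocks M 0 0 N) (Matrix.fromBlocks M 0 0 N) := by
  obtain ⟨h, h', h1, h2, h3⟩ := H
  obtain ⟨k, k', k1, k2, k3⟩ := K
  refine ⟨Matrix.fromBlocks 0 h k 0, Matrix.fromBlocks 0 k' h' 0, ?_, ?_, ?_⟩
  · simp [Matrix.fromBlocks_multiply, h1, k1]
  · simp [Matrix.fromBlocks_multiply, h2, k2]
  · simp [Matrix.fromBlocks_multiply, h3, k3, Matrix.fromBlocks_neg]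

/-- Entries of the conjugating matrix, indexed by column then row. -/
def hcoef (lam : ℂ) : ℕ → ℕ → ℂ
  | 0, i => if i = 0 then 1 else 0
  | _ + 1, 0 => 0
  | j + 1, i + 1 => lam * (lam * hcoef lam j i + hcoef lam j (i + 1))

lemma hcoef_lt (lam : ℂ) : ∀ j i, j < i → hcoef lam j i = 0
  | 0, i, h => by simp [hcoef]; omega
  | j + 1, 0, h => by simp [hcoef]
  | j + 1, i + 1, h => by
    rw [hcoef, hcoef_lt lam j i (by omega), hcoef_lt lam j (i + 1) (by omega)]; simp

lemma hcoef_diag (lam : ℂ) (hl : lam ≠ 0) : ∀ j, hcoef lam j j ≠ 0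
  | 0 => by simp [hcoef]
  | j + 1 => by
    rw [hcoef, hcoef_lt lam j (j + 1) (by omega)]
    have := hcoef_diag lam hl j
    simp [hl, this]

lemma jordanC_mul_apply (lam : ℂ) (m : ℕ) {κ : Type*} (h : ℕ → κ → ℂ) (i : Fin m) (j : κ)
    (hm : h m j = 0) :
    (jordanC lam m * Matrix.of (fun (i : Fin m) (j : κ) => h i j)) i j
      = lam * h i j + h (i + 1) j := by
  rw [Matrix.mul_apply]
  simp only [jordanC, Matrix.of_apply]
  have : ∀ x : Fin m, (if (x : ℕ) = i then lam else if (x : ℕ) = i + 1 then 1 else 0) * h x j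
      = (if x = i then lam * h i j else 0) + (if (x : ℕ) = i + 1 then h (i + 1) j else 0) := by
    intro x
    by_cases h1 : x = i
    · subst h1; simp
    · have h1' : (x : ℕ) ≠ i := fun h => h1 (Fin.ext h)
      by_cases h2 : (x : ℕ) = i + 1
      · simp [h1, h2]
      · simp [h1, h1', h2]
  rw [Finset.sum_congr rfl (fun x _ => this x), Finset.sum_add_distrib]
  congr 1
  · simp
  · by_cases h3 : (i : ℕ) + 1 < m
    · rw [Finset.sum_eq_single (⟨i + 1, h3⟩ : Fin m)]
      · simp
      · intro b _ hb
        rw [if_neg]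
        intro h; exact hb (Fin.ext h)
      · simp
    · have : (i : ℕ) + 1 = m := by omega
      rw [this, hm]; simp

lemma mul_jordanC_apply (lam : ℂ) (m : ℕ) {κ : Type*} (h : κ → ℕ → ℂ) (i : κ) (j : Fin m) :
    (Matrix.of (fun (i : κ) (j : Fin m) => h i j) * jordanC lam m) i j
      = h i j * lam + (if (j : ℕ) = 0 then 0 else h i (j - 1)) := by
  rw [Matrix.mul_apply]
  simp only [jordanC, Matrix.of_apply]
  have : ∀ x : Fin m, h i x * (if (j : ℕ) = x then lam else if (j : ℕ) = x + 1 then 1 else 0)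
      = (if x = j then h i j * lam else 0) + (if (j : ℕ) = x + 1 then h i (j - 1) else 0) := by
    intro x
    by_cases h1 : x = j
    · subst h1; simp
    · have h1' : ¬ (j : ℕ) = x := fun h => h1 (Fin.ext h.symm)
      by_cases h2 : (j : ℕ) = x + 1
      · simp [h1, h2]
      · simp [h1, h1', h2]
  rw [Finset.sum_congr rfl (fun x _ => this x), Finset.sum_add_distrib]
  congr 1
  · simp
  · by_cases h3 : (j : ℕ) = 0
    · simp [h3]
    · rw [if_neg h3, Finset.sum_eq_single (⟨j - 1, by omega⟩ : Fin m)]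
      · rw [if_pos]; simp; omega
      · intro b _ hb
        rw [if_neg]
        intro h; apply hb; apply Fin.ext; simp; omega
      · simp

lemma NRel_jordan (lam : ℂ) (hl : lam ≠ 0) (s : ℕ) :
    NRel (jordanC lam s) (jordanC (-lam⁻¹) s) := by
  set h : Matrix (Fin s) (Fin s) ℂ := Matrix.of (fun i j => hcoef lam j i) with hh
  have hdet : IsUnit h.det := by
    rw [Matrix.det_of_isUpperTriangular]
    · rw [isUnit_iff_ne_zero, Finset.prod_ne_zero_iff]
      intro i _
      exact hcoef_diag lam hl i
    · intro i j hij
      exact hcoef_lt lam _ _ hij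
  refine ⟨h, h⁻¹, Matrix.mul_nonsing_inv h hdet, Matrix.nonsing_inv_mul h hdet, ?_⟩
  have e1 : jordanC lam s * h
      = Matrix.of (fun (i j : Fin s) => lam * hcoef lam j i + hcoef lam j (i + 1)) := by
    ext i j
    exact jordanC_mul_apply lam s (fun i (j : Fin s) => hcoef lam j i) i j
      (hcoef_lt lam _ _ j.2)
  rw [e1]
  ext i j
  have := mul_jordanC_apply (-lam⁻¹) s
    (fun (i : Fin s) j => lam * hcoef lam j i + hcoef lam j (i + 1)) i j
  rw [this]
  simp only [Matrix.neg_apply, hh, Matrix.of_apply]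
  rcases hj : (j : ℕ) with _ | j'
  · simp [hcoef, hl]
  · simp only [Nat.add_eq_zero_iff, one_ne_zero, and_false, if_false, Nat.add_sub_cancel]
    rw [show hcoef lam (j' + 1) (↑i + 1) = lam * (lam * hcoef lam j' i + hcoef lam j' (i + 1)) by
      rw [hcoef]]
    field_simp
    ring

lemma NRel_zero : NRel (0 : Matrix (Fin 0) (Fin 0) ℂ) (0 : Matrix (Fin 0) (Fin 0) ℂ) :=
  ⟨0, 0, by ext i; exact i.elim0, by ext i; exact i.elim0, by ext i; exact i.elim0⟩

lemma NRel_dsum_self (L : List ((m : ℕ) × Matrix (Fin m) (Fin m) ℂ))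
    (hL : ∀ b ∈ L, NRel b.2 b.2) : NRel (dsum L).2 (dsum L).2 := by
  induction L with
  | nil => exact NRel_zero
  | cons b L ih =>
    obtain ⟨m, M⟩ := b
    have h1 : NRel M M := hL ⟨m, M⟩ (by simp)
    have h2 := ih (fun b hb => hL b (by simp [hb]))
    exact (h1.blocks h2).reindex _ _

/-- The list of Jordan blocks with a fixed eigenvalue. -/
def jl (lam : ℂ) (ss : List ℕ) : List ((m : ℕ) × Matrix (Fin m) (Fin m) ℂ) :=
  ss.map fun s => ⟨s, jordanC lam s⟩

lemma NRel_dsum_jl (lam : ℂ) (hl : lam ≠ 0) (ss : List ℕ) :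
    NRel (dsum (jl lam ss)).2 (dsum (jl (-lam⁻¹) ss)).2 := by
  induction ss with
  | nil => exact NRel_zero
  | cons s ss ih => exact ((NRel_jordan lam hl s).blocks ih).reindex _ _

/-- Direct sum of two square matrices, as in the statement. -/
abbrev pairM {s t : ℕ} (A : Matrix (Fin s) (Fin s) ℂ) (B : Matrix (Fin t) (Fin t) ℂ) :
    Matrix (Fin (s + t)) (Fin (s + t)) ℂ :=
  Matrix.reindex finSumFinEquiv finSumFinEquiv (Matrix.fromBlocks A 0 0 B)

/-- Admissible lists of blocks. -/
def Good (L : List ((m : ℕ) × Matrix (Fin m) (Fin m) ℂ)) : Prop :=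
  ∀ b ∈ L,
    (∃ (s : ℕ) (lam : ℂ), 1 ≤ s ∧ lam ≠ 0 ∧ 0 ≤ lam.im ∧ lam ≠ Complex.I ∧
      b = ⟨s + s, Matrix.reindex finSumFinEquiv finSumFinEquiv
            (Matrix.fromBlocks (jordanC lam s) 0 0 (jordanC (-lam⁻¹) s))⟩) ∨
    (∃ t : ℕ, 1 ≤ t ∧ b = ⟨t, jordanC Complex.I t⟩)

lemma NRel_of_good (L : List ((m : ℕ) × Matrix (Fin m) (Fin m) ℂ)) (hL : Good L) :
    NRel (dsum L).2 (dsum L).2 := by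
  apply NRel_dsum_self
  intro b hb
  rcases hL b hb with ⟨s, lam, _, hl, _, _, rfl⟩ | ⟨t, _, rfl⟩
  · have h1 := NRel_jordan lam hl s
    have h2 := NRel_jordan (-lam⁻¹) (by simpa using hl) s
    rw [show -(-lam⁻¹)⁻¹ = lam by simp [inv_neg]] at h2
    exact (h1.pair h2).reindex _ _
  · have := NRel_jordan Complex.I Complex.I_ne_zero t
    simpa using this

/-! ### Quaternionic determinants -/

/-- The ring homomorphism underlying `C2H`. -/
def C2Hhom : ℂ →+* Quaternion ℝ := (Quaternion.ofComplex : ℂ →ₐ[ℝ] Quaternion ℝ).toRingHom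

lemma C2Hhom_apply (z : ℂ) : C2Hhom z = C2H z := rfl

lemma map_C2H_mul {l m k : Type*} [Fintype m] (A : Matrix l m ℂ) (B : Matrix m k ℂ) :
    (A * B).map C2H = A.map C2H * B.map C2H :=
  Matrix.map_mul (f := C2Hhom)

lemma map_C2H_one {m : Type*} [DecidableEq m] : (1 : Matrix m m ℂ).map C2H = 1 :=
  Matrix.map_one C2Hhom (map_zero _) (map_one _)

lemma map_C2H_neg {m k : Type*} (A : Matrix m k ℂ) : (-A).map C2H = -(A.map C2H) := by
  ext1 i j
  exact map_neg C2Hhom (A i j)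

lemma qc1_mul (p q : Quaternion ℝ) : qc1 (p * q) = qc1 p * qc1 q - qc2 p * (starRingEnd ℂ) (qc2 q) := by
  apply Complex.ext <;> simp [qc1, qc2] <;> ring

lemma qc2_mul (p q : Quaternion ℝ) : qc2 (p * q) = qc1 p * qc2 q + qc2 p * (starRingEnd ℂ) (qc1 q) := by
  apply Complex.ext <;> simp [qc1, qc2] <;> ring

/-- `qc1` as an additive map. -/
def qc1h : Quaternion ℝ →+ ℂ where
  toFun := qc1
  map_zero' := by apply Complex.ext <;> rfl
  map_add' p q := by apply Complex.ext <;> simp [qc1]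

/-- `qc2` as an additive map. -/
def qc2h : Quaternion ℝ →+ ℂ where
  toFun := qc2
  map_zero' := by apply Complex.ext <;> rfl
  map_add' p q := by apply Complex.ext <;> simp [qc2]

lemma qc1_sum {ι : Type*} (s : Finset ι) (f : ι → Quaternion ℝ) :
    qc1 (∑ i ∈ s, f i) = ∑ i ∈ s, qc1 (f i) := map_sum qc1h f s

lemma qc2_sum {ι : Type*} (s : Finset ι) (f : ι → Quaternion ℝ) :
    qc2 (∑ i ∈ s, f i) = ∑ i ∈ s, qc2 (f i) := map_sum qc2h f s

lemma Phi_mul {m : Type*} [Fintype m] (A B : Matrix m m (Quaternion ℝ)) :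
    Phi (A * B) = Phi A * Phi B := by
  ext i j
  rcases i with i | i <;> rcases j with j | j <;>
    simp only [Phi, Matrix.mul_apply, Fintype.sum_sum_type, Matrix.fromBlocks_apply₁₁,
      Matrix.fromBlocks_apply₁₂, Matrix.fromBlocks_apply₂₁, Matrix.fromBlocks_apply₂₂,
      Matrix.map_apply, Matrix.neg_apply, qc1_sum, qc2_sum, qc1_mul, qc2_mul, map_sum,
      ← Finset.sum_add_distrib, ← Finset.sum_neg_distrib] <;>
    refine Finset.sum_congr rfl (fun x _ => ?_) <;> simp <;> ring

lemma Phi_C2H {m : Type*} [Fintype m] (h : Matrix m m ℂ) :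
    Phi (h.map C2H) = Matrix.fromBlocks h 0 0 (h.map (starRingEnd ℂ)) := by
  have e1 : ∀ z, qc1 (C2H z) = z := fun z => rfl
  have e2 : ∀ z, qc2 (C2H z) = 0 := fun z => rfl
  ext i j
  rcases i with i | i <;> rcases j with j | j <;> simp [Phi, e1, e2]

lemma qdet_mul {m : Type*} [Fintype m] [DecidableEq m] (A B : Matrix m m (Quaternion ℝ)) :
    qdet (A * B) = qdet A * qdet B := by
  rw [qdet, Phi_mul, Matrix.det_mul, qdet, qdet]

lemma qdet_C2H {m : Type*} [Fintype m] [DecidableEq m] (h : Matrix m m ℂ) :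
    qdet (h.map C2H) = h.det * (starRingEnd ℂ) h.det := by
  rw [qdet, Phi_C2H, Matrix.det_fromBlocks_zero₁₂, RingHom.map_det]
  rfl

lemma NRel.exists_det_one {n : ℕ} {D : Matrix (Fin n) (Fin n) ℂ} (H : NRel D D) :
    ∃ h : Matrix (Fin n) (Fin n) ℂ, h.det = 1 ∧ D * h * D = -h := by
  obtain ⟨h, h', h1, h2, h3⟩ := H
  have hd : h.det ≠ 0 := by
    intro h0
    have := congrArg Matrix.det h1
    rw [Matrix.det_mul, h0] at this
    simp at this
  rcases Nat.eq_zero_or_pos n with rfl | hn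
  · exact ⟨h, by simp, h3⟩
  · obtain ⟨c, hc⟩ := IsAlgClosed.exists_pow_nat_eq (h.det)⁻¹ hn
    refine ⟨c • h, ?_, ?_⟩
    · rw [Matrix.det_smul, Fintype.card_fin, hc, inv_mul_cancel₀ hd]
    · rw [Matrix.mul_smul, Matrix.smul_mul, h3, smul_neg]

lemma backward (n : ℕ) (A : (Matrix (Fin n) (Fin n) (Quaternion ℝ))ˣ)
    (L : List ((m : ℕ) × Matrix (Fin m) (Fin m) ℂ)) (hL : Good L)
    (e : Fin (dsum L).1 ≃ Fin n) (S : (Matrix (Fin n) (Fin n) (Quaternion ℝ))ˣ)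
    (hS : S.val * A.val * (S⁻¹).val = (Matrix.reindex e e (dsum L).2).map C2H) :
    ∃ g : (Matrix (Fin n) (Fin n) (Quaternion ℝ))ˣ, qdet g.val = 1 ∧ g * A * g⁻¹ = -A⁻¹ := by
  obtain ⟨h, hd, hh⟩ := ((NRel_of_good L hL).reindex e e).exists_det_one
  set D := Matrix.reindex e e (dsum L).2
  have hdu : IsUnit h.det := by rw [hd]; exact isUnit_one
  let H : (Matrix (Fin n) (Fin n) (Quaternion ℝ))ˣ :=
    ⟨h.map C2H, h⁻¹.map C2H, by rw [← map_C2H_mul, Matrix.mul_nonsing_inv h hdu, map_C2H_one],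
      by rw [← map_C2H_mul, Matrix.nonsing_inv_mul h hdu, map_C2H_one]⟩
  have hB : (S * A * S⁻¹) * H * (S * A * S⁻¹) = -H := by
    apply Units.ext
    have := congrArg (fun M => M.map C2H) hh
    simp only [map_C2H_mul, map_C2H_neg] at this
    rw [← hS] at this
    exact this
  refine ⟨S⁻¹ * H * S, ?_, ?_⟩
  · have h1 : qdet (S⁻¹ * H * S).val = qdet (S⁻¹).val * qdet H.val * qdet S.val := by
      rw [Units.val_mul, Units.val_mul, qdet_mul, qdet_mul]
    have h2 : qdet (S⁻¹).val * qdet S.val = 1 := by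
      rw [← qdet_mul, Units.inv_mul, ← map_C2H_one, qdet_C2H]; simp
    have h3 : qdet H.val = 1 := by
      change qdet (h.map C2H) = 1
      rw [qdet_C2H, hd]; simp
    rw [h1, h3, mul_one, h2]
  · rw [mul_inv_eq_iff_eq_mul, ← mul_right_inj (S * A), ← mul_left_inj S⁻¹]
    have e1 : S * A * (S⁻¹ * H * S * A) * S⁻¹ = (S * A * S⁻¹) * H * (S * A * S⁻¹) := by group
    rw [e1, hB]
    rw [neg_mul, mul_neg, neg_mul]
    congr 1
    group

/-! ### Matrices of endomorphisms over a division ring -/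

open Module in
/-- `f` has the complex matrix `M` (row convention) in some basis. -/
def HasMat {D : Type*} [DivisionRing D] (φ : ℂ →+* D) {V : Type*} [AddCommGroup V] [Module D V]
    (f : V →ₗ[D] V) {ι : Type*} [Fintype ι] (M : Matrix ι ι ℂ) : Prop :=
  ∃ b : Basis ι D V, ∀ k, f (b k) = ∑ l, φ (M k l) • b l

section HasMat

open Module

variable {D : Type*} [DivisionRing D] {φ : ℂ →+* D} {V : Type*} [AddCommGroup V] [Module D V]
  {f : V →ₗ[D] V} {ι κ : Type*} [Fintype ι] [Fintype κ]

lemma HasMat.reindex {M : Matrix ι ι ℂ} (H : HasMat φ f M) (e : ι ≃ κ) :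
    HasMat φ f (Matrix.reindex e e M) := by
  obtain ⟨b, hb⟩ := H
  refine ⟨b.reindex e, fun k => ?_⟩
  rw [Basis.reindex_apply, hb, ← Equiv.sum_comp e]
  simp

lemma HasMat.blocks {p q : Submodule D V} (hpq : IsCompl p q) (hp : ∀ x ∈ p, f x ∈ p)
    (hq : ∀ x ∈ q, f x ∈ q) {M : Matrix ι ι ℂ} {N : Matrix κ κ ℂ}
    (H : HasMat φ (f.restrict hp) M) (K : HasMat φ (f.restrict hq) N) :
    HasMat φ f (Matrix.fromBlocks M 0 0 N) := by
  obtain ⟨b, hb⟩ := H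
  obtain ⟨c, hc⟩ := K
  refine ⟨(b.prod c).map (Submodule.prodEquivOfIsCompl p q hpq), ?_⟩
  have hb' : ∀ k, f (b k) = ∑ l, φ (M k l) • (b l : V) := fun k => by
    have := congrArg Subtype.val (hb k)
    simpa using this
  have hc' : ∀ k, f (c k) = ∑ l, φ (N k l) • (c l : V) := fun k => by
    have := congrArg Subtype.val (hc k)
    simpa using this
  rintro (k | k)
  · simp [Basis.prod_apply, hb']
  · simp [Basis.prod_apply, hc']

lemma HasMat.shift [DecidableEq ι] {M : Matrix ι ι ℂ} (H : HasMat φ f M) (lam : ℂ)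
    {f' : V →ₗ[D] V} (hf : ∀ v, f' v = f v + φ lam • v) :
    HasMat φ f' (M + Matrix.scalar ι lam) := by
  obtain ⟨b, hb⟩ := H
  refine ⟨b, fun k => ?_⟩
  rw [hf, hb]
  simp only [Matrix.add_apply, map_add, add_smul, Finset.sum_add_distrib]
  congr 1
  rw [Finset.sum_eq_single k]
  · simp
  · intro l _ hl
    simp [Matrix.diagonal_apply_ne _ hl.symm]
  · simp

lemma HasMat.finrank_eq {M : Matrix ι ι ℂ} (H : HasMat φ f M) : finrank D V = Fintype.card ι := by
  obtain ⟨b, hb⟩ := H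
  exact finrank_eq_card_basis b

lemma HasMat.transfer [DecidableEq ι] [DecidableEq κ] {W : Type*} [AddCommGroup W] [Module D W]
    {f₂ : W →ₗ[D] W} {M : Matrix ι ι ℂ} {M' : Matrix κ κ ℂ} (H : HasMat φ f M) (R : NRel M' M)
    (g : V ≃ₗ[D] W) (hg : ∀ v, f₂ (g (f v)) = - g v) : HasMat φ f₂ M' := by
  obtain ⟨b, hb⟩ := H
  obtain ⟨h, h', h1, h2, h3⟩ := R
  have hb' : ∀ k, g (b k) = - ∑ l, φ (M k l) • f₂ (g (b l)) := fun k => by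
    have := hg (b k)
    rw [hb] at this
    simp only [map_sum, map_smul] at this
    rw [this, neg_neg]
  let c : κ → W := fun k => ∑ l, φ (h k l) • g (b l)
  have hc : ∀ l, g (b l) = ∑ k, φ (h' l k) • c k := fun l => by
    simp only [c, Finset.smul_sum, smul_smul]
    rw [Finset.sum_comm]
    simp only [← Finset.sum_smul, ← map_mul, ← map_sum, ← Matrix.mul_apply, h2]
    rw [Finset.sum_eq_single l]
    · simp
    · intro k _ hk
      simp [Matrix.one_apply_ne hk.symm]
    · simp
  have hcard : Fintype.card ι = Fintype.card κ := by
    have e1 := Matrix.trace_mul_comm h h'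
    rw [h1, h2, Matrix.trace_one, Matrix.trace_one] at e1
    exact_mod_cast e1.symm
  have hspan : ⊤ ≤ Submodule.span D (Set.range c) := by
    have h0 : ⊤ ≤ Submodule.span D (Set.range (b.map g)) := (b.map g).span_eq.ge
    refine h0.trans (Submodule.span_le.2 ?_)
    rintro _ ⟨l, rfl⟩
    rw [Basis.map_apply, hc]
    exact Submodule.sum_mem _ fun k _ =>
      Submodule.smul_mem _ _ (Submodule.subset_span ⟨k, rfl⟩)
  have hfr : Fintype.card κ = finrank D W := by
    rw [finrank_eq_card_basis (b.map g), hcard]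
  refine ⟨basisOfTopLeSpanOfCardEqFinrank c hspan hfr, fun k => ?_⟩
  rw [coe_basisOfTopLeSpanOfCardEqFinrank]
  have e2 : f₂ (c k) = ∑ l, φ (h k l) • f₂ (g (b l)) := by simp [c]
  have e3 : ∑ l, φ (M' k l) • c l = ∑ j, φ ((M' * h) k j) • g (b j) := by
    simp only [c, Finset.smul_sum, smul_smul]
    rw [Finset.sum_comm]
    simp only [← Finset.sum_smul, ← map_mul, ← map_sum, ← Matrix.mul_apply]
  rw [e2, e3]
  have e4 : ∀ j, φ ((M' * h) k j) • g (b j)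
      = - ∑ l, φ ((M' * h) k j * M j l) • f₂ (g (b l)) := fun j => by
    rw [hb' j, smul_neg, Finset.smul_sum]
    simp only [smul_smul, map_mul]
  rw [Finset.sum_congr rfl (fun j _ => e4 j), Finset.sum_neg_distrib, Finset.sum_comm]
  simp only [← Finset.sum_smul, ← map_sum, ← Matrix.mul_apply, h3]
  simp

end HasMat

lemma jordanC_shift (lam : ℂ) (m : ℕ) :
    jordanC 0 m + Matrix.scalar (Fin m) lam = jordanC lam m := by
  ext i j
  by_cases h : i = j
  · subst h; simp [jordanC]
  · have h' : ¬ (j : ℕ) = i := fun e => h (Fin.ext e.symm)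
    simp [jordanC, Matrix.diagonal_apply_ne _ h, h']

/-- Two square matrices agree up to a bijection of the index sets. -/
def RE {ι κ : Type*} (M : Matrix ι ι ℂ) (N : Matrix κ κ ℂ) : Prop :=
  ∃ e : ι ≃ κ, ∀ i j, M i j = N (e i) (e j)

section RE

variable {ι κ μ ν ι' κ' : Type*}

lemma RE.refl (M : Matrix ι ι ℂ) : RE M M := ⟨Equiv.refl _, fun _ _ => rfl⟩

lemma RE.symm {M : Matrix ι ι ℂ} {N : Matrix κ κ ℂ} (H : RE M N) : RE N M := by
  obtain ⟨e, he⟩ := H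
  exact ⟨e.symm, fun i j => by rw [he]; simp⟩

lemma RE.trans {M : Matrix ι ι ℂ} {N : Matrix κ κ ℂ} {P : Matrix μ μ ℂ} (H : RE M N)
    (K : RE N P) : RE M P := by
  obtain ⟨e, he⟩ := H
  obtain ⟨e', he'⟩ := K
  exact ⟨e.trans e', fun i j => by rw [he, he']; rfl⟩

lemma RE.reindex (M : Matrix ι ι ℂ) (e : ι ≃ κ) : RE M (Matrix.reindex e e M) :=
  ⟨e, fun i j => by simp⟩

lemma RE.blocks {M : Matrix ι ι ℂ} {N : Matrix κ κ ℂ} {M' : Matrix ι' ι' ℂ} {N' : Matrix κ' κ' ℂ}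
    (H : RE M M') (K : RE N N') :
    RE (Matrix.fromBlocks M 0 0 N) (Matrix.fromBlocks M' 0 0 N') := by
  obtain ⟨e, he⟩ := H
  obtain ⟨e', he'⟩ := K
  refine ⟨e.sumCongr e', ?_⟩
  rintro (i | i) (j | j) <;> simp [he, he']

lemma RE.assoc (M : Matrix ι ι ℂ) (N : Matrix κ κ ℂ) (P : Matrix μ μ ℂ) :
    RE (Matrix.fromBlocks (Matrix.fromBlocks M 0 0 N) 0 0 P)
      (Matrix.fromBlocks M 0 0 (Matrix.fromBlocks N 0 0 P)) := by
  refine ⟨Equiv.sumAssoc _ _ _, ?_⟩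
  rintro ((i | i) | i) ((j | j) | j) <;> simp

lemma RE.comm4 (M : Matrix ι ι ℂ) (N : Matrix κ κ ℂ) (P : Matrix μ μ ℂ) (Q : Matrix ν ν ℂ) :
    RE (Matrix.fromBlocks (Matrix.fromBlocks M 0 0 N) 0 0 (Matrix.fromBlocks P 0 0 Q))
      (Matrix.fromBlocks (Matrix.fromBlocks M 0 0 P) 0 0 (Matrix.fromBlocks N 0 0 Q)) := by
  refine ⟨Equiv.sumSumSumComm _ _ _ _, ?_⟩
  rintro ((i | i) | (i | i)) ((j | j) | (j | j)) <;> simp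

lemma RE.add_scalar [Fintype ι] [Fintype κ] [DecidableEq ι] [DecidableEq κ]
    {M : Matrix ι ι ℂ} {N : Matrix κ κ ℂ} (H : RE M N) (lam : ℂ) :
    RE (M + Matrix.scalar ι lam) (N + Matrix.scalar κ lam) := by
  obtain ⟨e, he⟩ := H
  refine ⟨e, fun i j => ?_⟩
  simp [he, Matrix.diagonal_apply]

lemma HasMat.of_RE {D : Type*} [DivisionRing D] {φ : ℂ →+* D} {V : Type*} [AddCommGroup V]
    [Module D V] {f : V →ₗ[D] V} [Fintype ι] [Fintype κ] {M : Matrix ι ι ℂ} {N : Matrix κ κ ℂ}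
    (H : HasMat φ f M) (K : RE M N) : HasMat φ f N := by
  obtain ⟨e, he⟩ := K
  have : N = Matrix.reindex e e M := by
    ext i j
    simp [he]
  rw [this]
  exact H.reindex e

end RE

lemma RE_dsum_cons {m : ℕ} (M : Matrix (Fin m) (Fin m) ℂ)
    (L : List ((m : ℕ) × Matrix (Fin m) (Fin m) ℂ)) :
    RE (Matrix.fromBlocks M 0 0 (dsum L).2) (dsum (⟨m, M⟩ :: L)).2 :=
  RE.reindex _ _

lemma dsum_jl_shift (lam : ℂ) (ss : List ℕ) :
    RE ((dsum (jl 0 ss)).2 + Matrix.scalar _ lam) (dsum (jl lam ss)).2 := by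
  induction ss with
  | nil => exact ⟨Equiv.refl _, fun i => i.elim0⟩
  | cons s ss ih =>
    refine ((RE_dsum_cons _ _).symm.add_scalar lam).trans
      (RE.trans ?_ (RE_dsum_cons (jordanC lam s) (jl lam ss)))
    have : Matrix.fromBlocks (jordanC 0 s) 0 0 (dsum (jl 0 ss)).2 + Matrix.scalar _ lam
        = Matrix.fromBlocks (jordanC 0 s + Matrix.scalar _ lam) 0 0
          ((dsum (jl 0 ss)).2 + Matrix.scalar _ lam) := by
      ext i j
      rcases i with i | i <;> rcases j with j | j <;> simp [Matrix.diagonal_apply]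
    exact this ▸ RE.blocks (by rw [jordanC_shift]; exact RE.refl _) ih

lemma dsum_append (L₁ L₂ : List ((m : ℕ) × Matrix (Fin m) (Fin m) ℂ)) :
    RE (Matrix.fromBlocks (dsum L₁).2 0 0 (dsum L₂).2) (dsum (L₁ ++ L₂)).2 := by
  induction L₁ with
  | nil => exact ⟨Equiv.emptySum (Fin 0) _, by
      rintro (i | i) (j | j)
      · exact i.elim0
      · exact i.elim0
      · exact j.elim0
      · rfl⟩
  | cons b L₁ ih =>
    obtain ⟨m, M⟩ := b
    exact ((RE_dsum_cons M L₁).symm.blocks (RE.refl _)).trans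
      ((RE.assoc _ _ _).trans (((RE.refl M).blocks ih).trans (RE_dsum_cons M (L₁ ++ L₂))))

/-- The list of paired Jordan blocks. -/
def pl (lam : ℂ) (ss : List ℕ) : List ((m : ℕ) × Matrix (Fin m) (Fin m) ℂ) :=
  ss.map fun s => ⟨s + s, Matrix.reindex finSumFinEquiv finSumFinEquiv
            (Matrix.fromBlocks (jordanC lam s) 0 0 (jordanC (-lam⁻¹) s))⟩

lemma dsum_pl (lam : ℂ) (ss : List ℕ) :
    RE (Matrix.fromBlocks (dsum (jl lam ss)).2 0 0 (dsum (jl (-lam⁻¹) ss)).2)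
        (dsum (pl lam ss)).2 := by
  induction ss with
  | nil => exact ⟨Equiv.emptySum (Fin 0) _, by
      rintro (i | i)
      · exact i.elim0
      · exact i.elim0⟩
  | cons s ss ih =>
    exact ((RE_dsum_cons (jordanC lam s) (jl lam ss)).symm.blocks
      (RE_dsum_cons (jordanC (-lam⁻¹) s) (jl (-lam⁻¹) ss)).symm).trans
      ((RE.comm4 _ _ _ _).trans (((RE.reindex _ finSumFinEquiv).blocks ih).trans
        (RE_dsum_cons _ (pl lam ss))))

/-! ### Jordan form of nilpotent endomorphisms over a division ring -/

section Nilp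

open Module

universe u

variable {D : Type*} [DivisionRing D]

lemma exists_functional {V : Type*} [AddCommGroup V] [Module D V] (w : V) (hw : w ≠ 0) :
    ∃ ψ : V →ₗ[D] D, ψ w = 1 := by
  obtain ⟨g, hg⟩ := LinearMap.exists_extend
    ((LinearEquiv.toSpanNonzeroSingleton D V w hw).symm.toLinearMap)
  refine ⟨g, ?_⟩
  have := LinearMap.congr_fun hg ⟨w, Submodule.mem_span_singleton_self w⟩
  simp only [LinearMap.comp_apply, Submodule.subtype_apply] at this
  rw [this]
  exact LinearEquiv.coord_self D V w hw

lemma chain_key {V : Type*} [AddCommGroup V] [Module D V] (N : V →ₗ[D] V) (k : ℕ)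
    (hk : N ^ k = 0) (v : V) (ψ : V →ₗ[D] D) (hψ : ψ ((N ^ (k - 1)) v) = 1) (a : Fin k → D)
    (ha : ∀ m, m < k → ψ ((N ^ m) (∑ i, a i • (N ^ (i : ℕ)) v)) = 0) : a = 0 := by
  have key : ∀ n (hn : n < k), a ⟨n, hn⟩ = 0 := by
    intro n
    induction n using Nat.strong_induction_on with
    | _ n ih =>
      intro hn
      have h := ha (k - 1 - n) (by omega)
      simp only [map_sum, map_smul] at h
      rw [Finset.sum_eq_single ⟨n, hn⟩] at h
      · rw [← Module.End.mul_apply, ← pow_add] at h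
        simp only [show k - 1 - n + n = k - 1 by omega, hψ] at h
        simpa using h
      · intro i _ hi
        by_cases hlt : (i : ℕ) < n
        · have := ih i hlt i.2
          simp [this]
        · have h1 : n < i := by
            have : (i : ℕ) ≠ n := fun e => hi (Fin.ext e)
            omega
          rw [← Module.End.mul_apply, ← pow_add,
            show k - 1 - n + (i : ℕ) = (i - n - 1) + k by omega, pow_add, hk]
          simp
      · simp
  funext i
  exact key i i.2

lemma jordan_chain (φ : ℂ →+* D) {X : Type*} [AddCommGroup X] [Module D X] (N : X →ₗ[D] X)
    (k : ℕ) (b : Basis (Fin k) D X)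
    (h1 : ∀ i : Fin k, ∀ hi : (i : ℕ) + 1 < k, N (b i) = b ⟨i + 1, hi⟩)
    (h2 : ∀ i : Fin k, (i : ℕ) + 1 = k → N (b i) = 0) : HasMat φ N (jordanC 0 k) := by
  refine ⟨b, fun i => ?_⟩
  have hval : ∀ l : Fin k, φ (jordanC 0 k i l) • b l
      = if (l : ℕ) = i + 1 then b l else 0 := by
    intro l
    simp only [jordanC, Matrix.of_apply]
    by_cases h : (l : ℕ) = i
    · simp [h]
    · by_cases h' : (l : ℕ) = i + 1 <;> simp [h, h']
  simp only [hval]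
  by_cases hi : (i : ℕ) + 1 < k
  · rw [h1 i hi, Finset.sum_eq_single ⟨i + 1, hi⟩]
    · simp
    · intro l _ hl
      rw [if_neg]
      intro e; exact hl (Fin.ext e)
    · simp
  · rw [h2 i (by omega), Finset.sum_eq_zero]
    intro l _
    rw [if_neg]
    omega

lemma nilp_jordan (φ : ℂ →+* D) : ∀ (d : ℕ) (V : Type u) [AddCommGroup V] [Module D V]
    [Module.Finite D V] (N : V →ₗ[D] V), finrank D V = d → IsNilpotent N →
    ∃ ss : List ℕ, (∀ s ∈ ss, 1 ≤ s) ∧ HasMat φ N (dsum (jl 0 ss)).2 := by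
  intro d
  induction d using Nat.strong_induction_on with
  | _ d ih =>
    intro V _ _ _ N hd hN
    rcases subsingleton_or_nontrivial V with hV | hV
    · refine ⟨[], by simp, ?_⟩
      change HasMat φ N (0 : Matrix (Fin 0) (Fin 0) ℂ)
      exact ⟨Basis.empty V, fun k => k.elim0⟩
    · obtain ⟨k, hk0, hk⟩ : ∃ k, N ^ k ≠ 0 ∧ N ^ (k + 1) = 0 := by
        classical
        have hex : ∃ n, N ^ n = 0 := hN
        have h1 := Nat.find_spec hex
        have h0 : Nat.find hex ≠ 0 := by
          intro h0
          rw [h0, pow_zero] at h1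
          exact one_ne_zero h1
        refine ⟨Nat.find hex - 1, Nat.find_min hex (by omega), ?_⟩
        rw [Nat.sub_add_cancel (by omega)]
        exact h1
      obtain ⟨v, hv⟩ : ∃ v, (N ^ k) v ≠ 0 := by
        by_contra hcon
        push Not at hcon
        exact hk0 (LinearMap.ext hcon)
      obtain ⟨ψ, hψ⟩ := exists_functional (D := D) _ hv
      let c : Fin (k + 1) → V := fun i => (N ^ (i : ℕ)) v
      have key := chain_key N (k + 1) hk v ψ (by simpa using hψ)
      have hLI : LinearIndependent D c := by
        rw [Fintype.linearIndependent_iff]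
        intro a ha i
        have := key a (fun m _ => by
          change ψ ((N ^ m) (∑ i, a i • c i)) = 0
          rw [ha]; simp)
        rw [this]; rfl
      let Ψ : V →ₗ[D] (Fin (k + 1) → D) := LinearMap.pi fun m => ψ ∘ₗ (N ^ (m : ℕ))
      let U := LinearMap.ker Ψ
      let X := Submodule.span D (Set.range c)
      have hU : ∀ x, x ∈ U ↔ ∀ m, m < k + 1 → ψ ((N ^ m) x) = 0 := by
        intro x
        constructor
        · intro hx m hm
          exact congrFun (LinearMap.mem_ker.1 hx) ⟨m, hm⟩
        · intro hx
          rw [LinearMap.mem_ker]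
          funext m
          exact hx m m.2
      have hNU : ∀ x ∈ U, N x ∈ U := by
        intro x hx
        rw [hU] at hx ⊢
        intro m hm
        rw [← Module.End.mul_apply, ← pow_succ]
        by_cases h : m + 1 < k + 1
        · exact hx _ h
        · rw [show m + 1 = k + 1 by omega, hk]; simp
      have hc1 : ∀ i : Fin (k + 1), ∀ hi : (i : ℕ) + 1 < k + 1, N (c i) = c ⟨i + 1, hi⟩ := by
        intro i hi
        change N ((N ^ (i : ℕ)) v) = (N ^ ((i : ℕ) + 1)) v
        rw [← Module.End.mul_apply, ← pow_succ']
      have hc2 : ∀ i : Fin (k + 1), (i : ℕ) + 1 = k + 1 → N (c i) = 0 := by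
        intro i hi
        change N ((N ^ (i : ℕ)) v) = 0
        rw [← Module.End.mul_apply, ← pow_succ', hi, hk]; simp
      have hNX : ∀ x ∈ X, N x ∈ X := by
        intro x hx
        induction hx using Submodule.span_induction with
        | mem x hx =>
          obtain ⟨i, rfl⟩ := hx
          by_cases hi : (i : ℕ) + 1 < k + 1
          · rw [hc1 i hi]; exact Submodule.subset_span ⟨_, rfl⟩
          · rw [hc2 i (by omega)]; exact X.zero_mem
        | zero => simp
        | add x y _ _ hx hy => rw [map_add]; exact X.add_mem hx hy
        | smul a x _ hx => rw [map_smul]; exact X.smul_mem a hx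
      have hdisj : Disjoint X U := by
        rw [Submodule.disjoint_def]
        intro x hx hxU
        obtain ⟨a, rfl⟩ := (Submodule.mem_span_range_iff_exists_fun D).1 hx
        have := key a ((hU _).1 hxU)
        simp [this]
      have hXr : finrank D X = k + 1 := by
        have := finrank_span_eq_card hLI
        simpa using this
      have hUr : finrank D V ≤ finrank D X + finrank D U := by
        have h1 := LinearMap.finrank_range_add_finrank_ker Ψ
        have h2 : finrank D (LinearMap.range Ψ) ≤ k + 1 := by
          have := Submodule.finrank_le (LinearMap.range Ψ)
          simpa using this
        have : finrank D U = finrank D (LinearMap.ker Ψ) := rfl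
        omega
      have hcompl : IsCompl X U := by
        refine ⟨hdisj, ?_⟩
        rw [codisjoint_iff]
        apply Submodule.eq_top_of_finrank_eq
        have h1 := Submodule.finrank_sup_add_finrank_inf_eq X U
        rw [hdisj.eq_bot, finrank_bot] at h1
        have h2 := Submodule.finrank_le (X ⊔ U)
        omega
      have hUlt : finrank D U < d := by
        have := Submodule.finrank_add_eq_of_isCompl hcompl
        omega
      have hNUnil : IsNilpotent (N.restrict hNU) := by
        refine ⟨k + 1, ?_⟩
        rw [Module.End.pow_restrict]
        ext x
        simp [LinearMap.restrict_apply, hk]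
      obtain ⟨ss, hss, hmat⟩ := ih _ hUlt U (N.restrict hNU) rfl hNUnil
      refine ⟨(k + 1) :: ss, by simpa using hss, ?_⟩
      have hX : HasMat φ (N.restrict hNX) (jordanC 0 (k + 1)) := by
        refine jordan_chain φ _ _ (Basis.span hLI) ?_ ?_
        · intro i hi
          apply Subtype.ext
          rw [LinearMap.coe_restrict_apply, Basis.span_apply, Basis.span_apply, hc1 i hi]
        · intro i hi
          apply Subtype.ext
          rw [LinearMap.coe_restrict_apply, Basis.span_apply, hc2 i hi]
          rfl
      exact (HasMat.blocks hcompl hNX hNU hX hmat).of_RE (RE_dsum_cons _ (jl 0 ss))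

end Nilp


/-! ### The primary Jordan form over the quaternions -/

section Primary

open Module

universe u

/-- The quaternions. -/
abbrev HH := Quaternion ℝ

/-- The quaternion `j`. -/
def qj : HH := ⟨0, 0, 1, 0⟩

lemma qj_re : qj.re = 0 := rfl
lemma qj_imI : qj.imI = 0 := rfl
lemma qj_imJ : qj.imJ = 1 := rfl
lemma qj_imK : qj.imK = 0 := rfl
lemma C2H_re (z : ℂ) : (C2H z).re = z.re := rfl
lemma C2H_imI (z : ℂ) : (C2H z).imI = z.im := rfl
lemma C2H_imJ (z : ℂ) : (C2H z).imJ = 0 := rfl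
lemma C2H_imK (z : ℂ) : (C2H z).imK = 0 := rfl

lemma qj_mul_qj : qj * qj = -1 := by
  apply Quaternion.ext <;> simp [qj_re, qj_imI, qj_imJ, qj_imK] <;> rfl

lemma qj_mul_C2H (z : ℂ) : qj * C2H z = C2H ((starRingEnd ℂ) z) * qj := by
  apply Quaternion.ext <;>
    simp [qj_re, qj_imI, qj_imJ, qj_imK, C2H_re, C2H_imI, C2H_imJ, C2H_imK]

lemma q_decomp (q : HH) : q = C2H (qc1 q) + C2H (qc2 q) * qj := by
  apply Quaternion.ext <;>
    simp [qj_re, qj_imI, qj_imJ, qj_imK, C2H_re, C2H_imI, C2H_imJ, C2H_imK, qc1, qc2]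

lemma C2H_real (r : ℝ) : C2H (r : ℂ) = algebraMap ℝ HH r := by
  apply Quaternion.ext <;> simp [C2H_re, C2H_imI, C2H_imJ, C2H_imK, Quaternion.algebraMap_def]

lemma C2H_real_smul {V : Type u} [AddCommGroup V] [Module HH V] [Module ℝ V]
    [IsScalarTower ℝ HH V] (r : ℝ) (v : V) : C2H (r : ℂ) • v = r • v := by
  rw [C2H_real, algebraMap_smul]

instance smulComm_aux {V : Type u} [AddCommGroup V] [Module HH V] [Module ℝ V]
    [IsScalarTower ℝ HH V] : SMulCommClass HH ℝ V :=
  SMulCommClass.symm _ _ _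

/-- The real quadratic polynomial with roots `lam`, `conj lam`, evaluated at `f`. -/
def qop {V : Type u} [AddCommGroup V] [Module HH V] [Module ℝ V]
    [IsScalarTower ℝ HH V] (f : V →ₗ[HH] V) (lam : ℂ) : Module.End HH V :=
  f ∘ₗ f - (2 * lam.re) • f + (Complex.normSq lam) • LinearMap.id

lemma qop_apply {V : Type u} [AddCommGroup V] [Module HH V] [Module ℝ V]
    [IsScalarTower ℝ HH V] (f : V →ₗ[HH] V) (lam : ℂ) (v : V) :
    qop f lam v = f (f v) - (2 * lam.re) • f v + (Complex.normSq lam) • v := rfl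

lemma primary_real {V : Type u} [AddCommGroup V] [Module HH V] [Module.Finite HH V] [Module ℝ V]
    [IsScalarTower ℝ HH V] (f : V →ₗ[HH] V) (lam : ℂ) (hl : lam.im = 0) (N : ℕ)
    (hN : qop f lam ^ N = 0) :
    ∃ ss : List ℕ, (∀ s ∈ ss, 1 ≤ s) ∧ HasMat C2Hhom f (dsum (jl lam ss)).2 := by
  let T : Module.End HH V := f - lam.re • LinearMap.id
  have hT : T ^ 2 = qop f lam := by
    ext v
    rw [pow_two, Module.End.mul_apply, qop_apply]
    simp only [T, LinearMap.sub_apply, LinearMap.smul_apply, LinearMap.id_apply, map_sub,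
      LinearMap.map_smul_of_tower, Complex.normSq_apply, hl]
    module
  have hn : IsNilpotent T := ⟨2 * N, by rw [pow_mul, hT, hN]⟩
  obtain ⟨ss, hss, H⟩ := nilp_jordan C2Hhom _ V T rfl hn
  refine ⟨ss, hss, (H.shift lam (f' := f) ?_).of_RE (dsum_jl_shift lam ss)⟩
  intro v
  have : lam = (lam.re : ℂ) := by
    apply Complex.ext <;> simp [hl]
  rw [C2Hhom_apply, this, C2H_real_smul]
  simp [T]

lemma primary_im {V : Type u} [AddCommGroup V] [Module HH V] [Module.Finite HH V] [Module ℝ V]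
    [IsScalarTower ℝ HH V] [Module ℂ V] (hz : ∀ (z : ℂ) (v : V), z • v = C2H z • v)
    (f : V →ₗ[HH] V) (lam : ℂ) (hl : lam.im ≠ 0) (N : ℕ)
    (hN : qop f lam ^ N = 0) :
    ∃ ss : List ℕ, (∀ s ∈ ss, 1 ≤ s) ∧ HasMat C2Hhom f (dsum (jl lam ss)).2 := by
  have hfin1 : Module.Finite ℝ V := Module.Finite.trans HH V
  have hr : ∀ (r : ℝ) (v : V), (r : ℂ) • v = r • v := fun r v => by rw [hz, C2H_real_smul]
  have hst : IsScalarTower ℝ ℂ V := ⟨fun r z v => by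
    rw [← hr, smul_smul]; rfl⟩
  have hfin : Module.Finite ℂ V := Module.Finite.of_restrictScalars_finite ℝ ℂ V
  let F : Module.End ℂ V :=
    { toFun := f, map_add' := map_add f, map_smul' := fun z v => by simp [hz] }
  have hF : ∀ v, F v = f v := fun v => rfl
  have hjj : ∀ v : V, qj • qj • v = - v := fun v => by rw [smul_smul, qj_mul_qj]; simp
  have hjz : ∀ (z : ℂ) (v : V), qj • z • v = ((starRingEnd ℂ) z) • qj • v := fun z v => by
    rw [hz, hz, smul_smul, smul_smul, qj_mul_C2H]
  let T : ℂ → Module.End ℂ V := fun z => F - z • LinearMap.id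
  have hTv : ∀ z v, T z v = f v - z • v := fun z v => rfl
  have hTj : ∀ (z : ℂ) (n : ℕ) (v : V),
      (T ((starRingEnd ℂ) z) ^ n) (qj • v) = qj • (T z ^ n) v := by
    intro z n
    induction n with
    | zero => intro v; rfl
    | succ n ih =>
      intro v
      rw [pow_succ, pow_succ, Module.End.mul_apply, Module.End.mul_apply, ← ih]
      congr 1
      rw [hTv, hTv, smul_sub, map_smul, hjz]
  have hcomm : Commute (T lam) (T ((starRingEnd ℂ) lam)) := by
    ext v
    simp only [Module.End.mul_apply, hTv, ← hF, map_sub, map_smul]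
    module
  have hTq : ∀ v, (T lam * T ((starRingEnd ℂ) lam)) v = qop f lam v := by
    intro v
    rw [qop_apply, Module.End.mul_apply, hTv, hTv]
    rw [← hF, ← hF, ← hF, map_sub, map_smul, ← hr, ← hr, ← Complex.mul_conj]
    have : ((2 * lam.re : ℝ) : ℂ) = lam + (starRingEnd ℂ) lam := by
      rw [Complex.add_conj]
    rw [this]
    module
  have hprod : ∀ n v, ((T lam * T ((starRingEnd ℂ) lam)) ^ n) v = (qop f lam ^ n) v := by
    intro n
    induction n with
    | zero => intro v; rfl
    | succ n ih => 
      intro v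
      rw [pow_succ, pow_succ (qop f lam), Module.End.mul_apply (qop f lam ^ n), ← ih, ← hTq]
      rfl
  have hprod0 : T lam ^ N * T ((starRingEnd ℂ) lam) ^ N = 0 := by
    rw [← hcomm.mul_pow]
    ext v
    rw [hprod, hN]; rfl
  have hne : lam - (starRingEnd ℂ) lam ≠ 0 := by
    intro h
    have := congrArg Complex.im h
    simp at this
    exact hl this
  obtain ⟨a, b, hab, hc1, hc2⟩ : ∃ a b : Module.End ℂ V, T lam ^ N * a + T ((starRingEnd ℂ) lam) ^ N * b = 1
      ∧ a * T lam ^ N = T lam ^ N * a ∧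
      b * T ((starRingEnd ℂ) lam) ^ N = T ((starRingEnd ℂ) lam) ^ N * b := by
    have h0 : IsCoprime (Polynomial.X - Polynomial.C lam) (Polynomial.X - Polynomial.C ((starRingEnd ℂ) lam)) :=
      Polynomial.isCoprime_X_sub_C_of_isUnit_sub (by simpa using hne)
    obtain ⟨a, b, h⟩ := h0.pow (m := N) (n := N)
    have hx : ∀ z, Polynomial.aeval F (Polynomial.X - Polynomial.C z) = T z := fun z => by
      ext v
      simp [hTv, ← hF]
    have h' := congrArg (Polynomial.aeval F) h
    rw [map_add, map_mul, map_mul, map_pow, map_pow, hx, hx, map_one] at h'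
    have e1 : ∀ z (p : Polynomial ℂ), Polynomial.aeval F p * T z ^ N = T z ^ N * Polynomial.aeval F p := by
      intro z p
      rw [← hx, ← map_pow, ← map_mul, ← map_mul, mul_comm]
    refine ⟨Polynomial.aeval F a, Polynomial.aeval F b, ?_, e1 _ _, e1 _ _⟩
    rw [← e1, ← e1, h']
  let W : Submodule ℂ V := LinearMap.ker (T lam ^ N)
  have hTW : ∀ x ∈ W, T lam x ∈ W := by
    intro x hx
    change (T lam ^ N) _ = 0
    rw [← Module.End.mul_apply, ← pow_succ, pow_succ', Module.End.mul_apply]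
    have : (T lam ^ N) x = 0 := hx
    rw [this, map_zero]
  have hnil : IsNilpotent ((T lam).restrict hTW) := by
    refine ⟨N, ?_⟩
    rw [Module.End.pow_restrict]
    ext x
    have : (T lam ^ N) x = 0 := x.2
    simp [LinearMap.restrict_apply, this]
  obtain ⟨ss, hss, c, hc⟩ := nilp_jordan (RingHom.id ℂ) _ W ((T lam).restrict hTW) rfl hnil
  refine ⟨ss, hss, ?_⟩
  -- the `ℂ`-basis of `W` is an `ℍ`-basis of `V`
  have hdis : ∀ x, x ∈ W → (T ((starRingEnd ℂ) lam) ^ N) x = 0 → x = 0 := by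
    intro x hx hx'
    have h1 := congrArg (fun g : Module.End ℂ V => g x) hab
    have hx0 : (T lam ^ N) x = 0 := hx
    simp only [← hc1, ← hc2, LinearMap.add_apply, Module.End.mul_apply, hx0, hx', map_zero, add_zero, Module.End.one_apply] at h1
    exact h1.symm
  have hli : LinearIndependent HH (fun k => (c k : V)) := by
    rw [Fintype.linearIndependent_iff]
    intro q hq
    have hq' : (∑ k, qc1 (q k) • c k : W).1 + qj • (∑ k, ((starRingEnd ℂ) (qc2 (q k))) • c k : W).1 = 0 := by
      rw [← hq]
      simp only [AddSubmonoidClass.coe_finsetSum, Submodule.coe_smul, Finset.smul_sum, hjz, Complex.conj_conj]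
      rw [← Finset.sum_add_distrib]
      refine Finset.sum_congr rfl fun k _ => ?_
      conv_rhs => rw [q_decomp (q k)]
      rw [add_smul, mul_smul, hz, hz]
    set x := (∑ k, qc1 (q k) • c k : W) with hx
    set y := (∑ k, ((starRingEnd ℂ) (qc2 (q k))) • c k : W) with hy
    have hyk : (T ((starRingEnd ℂ) lam) ^ N) (qj • y.1) = 0 := by
      rw [hTj]
      have : (T lam ^ N) y.1 = 0 := y.2
      rw [this, smul_zero]
    have hx0 : x.1 = 0 := by
      apply hdis _ x.2
      rw [eq_neg_of_add_eq_zero_left hq', map_neg, hyk, neg_zero]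
    have hy0 : y.1 = 0 := by
      rw [hx0, zero_add] at hq'
      have := hjj y.1
      rw [hq', smul_zero] at this
      exact neg_eq_zero.1 this.symm
    have h1 := Fintype.linearIndependent_iff.1 c.linearIndependent _ (Subtype.ext hx0 : x = 0)
    have h2 := Fintype.linearIndependent_iff.1 c.linearIndependent _ (Subtype.ext hy0 : y = 0)
    intro k
    rw [q_decomp (q k), h1 k]
    have h3 : qc2 (q k) = 0 := by simpa using h2 k
    rw [h3]
    have : C2H 0 = 0 := map_zero C2Hhom
    simp [this]
  have hWs : ∀ x ∈ W, x ∈ Submodule.span HH (Set.range fun k => (c k : V)) := by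
    intro x hx
    have h1 := c.sum_repr ⟨x, hx⟩
    have h2 := congrArg Subtype.val h1
    simp only [AddSubmonoidClass.coe_finsetSum, Submodule.coe_smul] at h2
    rw [← h2]
    refine Submodule.sum_mem _ fun k _ => ?_
    rw [hz]
    exact Submodule.smul_mem _ _ (Submodule.subset_span ⟨k, rfl⟩)
  have hspan : ⊤ ≤ Submodule.span HH (Set.range fun k => (c k : V)) := by
    intro v _
    have h1 := congrArg (fun g : Module.End ℂ V => g v) hab
    simp only [LinearMap.add_apply, Module.End.mul_apply, Module.End.one_apply] at h1
    rw [← h1]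
    refine Submodule.add_mem _ ?_ ?_
    · have e : ∀ u : V, (T lam ^ N) (qj • u) = qj • (T ((starRingEnd ℂ) lam) ^ N) u := fun u => by
        have := hTj ((starRingEnd ℂ) lam) N u
        rwa [Complex.conj_conj] at this
      have h2 : qj • (T lam ^ N) (a v) ∈ W := by
        change (T lam ^ N) _ = 0
        rw [e, ← Module.End.mul_apply, ← (hcomm.pow_pow N N).eq, hprod0]
        simp
      have h3 := Submodule.smul_mem _ (-qj) (hWs _ h2)
      rwa [neg_smul, hjj, neg_neg] at h3
    · apply hWs
      change (T lam ^ N) _ = 0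
      rw [← Module.End.mul_apply, hprod0]; rfl
  have key : ∀ k, f (c k) = ∑ l, C2Hhom (((dsum (jl 0 ss)).2 + Matrix.scalar (Fin (dsum (jl 0 ss)).1) lam : Matrix _ _ ℂ) k l) • (c l : V) := by
    intro k
    have h1 := congrArg Subtype.val (hc k)
    rw [LinearMap.coe_restrict_apply, hTv, sub_eq_iff_eq_add] at h1
    rw [h1]
    simp only [Matrix.add_apply, map_add, add_smul, Finset.sum_add_distrib]
    congr 1
    · simp [hz, C2Hhom_apply]
    · rw [Finset.sum_eq_single k]
      · simp [hz, C2Hhom_apply]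
      · intro l _ hl
        simp [Matrix.diagonal_apply_ne _ hl.symm]
      · simp
  have H : HasMat C2Hhom f ((dsum (jl 0 ss)).2 + Matrix.scalar _ lam) := by
    refine ⟨Basis.mk hli hspan, fun k => ?_⟩
    simp only [Basis.mk_apply]
    exact key k
  exact H.of_RE (dsum_jl_shift lam ss)

lemma primary {V : Type u} [AddCommGroup V] [Module HH V] [Module.Finite HH V] [Module ℝ V]
    [IsScalarTower ℝ HH V] (f : V →ₗ[HH] V) (lam : ℂ) (N : ℕ)
    (hN : qop f lam ^ N = 0) :
    ∃ ss : List ℕ, (∀ s ∈ ss, 1 ≤ s) ∧ HasMat C2Hhom f (dsum (jl lam ss)).2 := by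
  by_cases hl : lam.im = 0
  · exact primary_real f lam hl N hN
  · let _ : Module ℂ V := Module.compHom V C2Hhom
    exact primary_im (fun z v => rfl) f lam hl N hN

end Primary

/-! ### The decomposition -/

section Decomp

open Module

universe u

lemma qop_restrict_pow {V : Type u} [AddCommGroup V] [Module HH V] [Module ℝ V]
    [IsScalarTower ℝ HH V] (f : V →ₗ[HH] V) (lam : ℂ) (p : Submodule HH V)
    (hp : ∀ x ∈ p, f x ∈ p) (k : ℕ) (x : p) :
    ((qop (f.restrict hp) lam ^ k) x : V) = (qop f lam ^ k) (x : V) := by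
  induction k generalizing x with
  | zero => rfl
  | succ k ih =>
    rw [pow_succ, pow_succ, Module.End.mul_apply, Module.End.mul_apply, ih]
    rfl

lemma inv_data {V : Type u} [AddCommGroup V] [Module HH V] [Module.Finite HH V]
    (f g : V →ₗ[HH] V) (hg : Function.Injective g) (h : ∀ v, f (g (f v)) = - g v) :
    ∃ fi : V →ₗ[HH] V, (∀ v, f (fi v) = v) ∧ (∀ v, fi (f v) = v) ∧
      (∀ v, g (f v) = - fi (g v)) ∧ (∀ v, f (g v) = - g (fi v)) := by
  have hf : Function.Injective f := by
    rw [injective_iff_map_eq_zero]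
    intro v hv
    have := h v
    rw [hv, map_zero, map_zero] at this
    exact (injective_iff_map_eq_zero g).1 hg v (neg_eq_zero.1 this.symm)
  let e := LinearEquiv.ofInjectiveEndo f hf
  have he : ∀ v, e v = f v := fun v => rfl
  have h1 : ∀ v, f (e.symm v) = v := fun v => by rw [← he, LinearEquiv.apply_symm_apply]
  have h2 : ∀ v, e.symm (f v) = v := fun v => by rw [← he, LinearEquiv.symm_apply_apply]
  refine ⟨e.symm, h1, h2, fun v => ?_, fun v => ?_⟩
  · have := h2 (g (f v))
    rw [h v, map_neg] at this
    exact this.symm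
  · have := h (e.symm v)
    rwa [h1] at this

lemma re_neg_inv (lam : ℂ) : (-lam⁻¹).re = -lam.re * (Complex.normSq lam)⁻¹ := by
  simp [Complex.inv_re, div_eq_mul_inv]

lemma normSq_neg_inv (lam : ℂ) : Complex.normSq (-lam⁻¹) = (Complex.normSq lam)⁻¹ := by
  simp

lemma g_ker {V : Type u} [AddCommGroup V] [Module HH V] [Module ℝ V]
    [IsScalarTower ℝ HH V] (f fi g : V →ₗ[HH] V) (h1 : ∀ v, f (fi v) = v) (h2 : ∀ v, fi (f v) = v)
    (h4 : ∀ v, f (g v) = - g (fi v)) (lam : ℂ) (hl : lam ≠ 0) :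
    ∀ (k : ℕ) (v : V), (qop f lam ^ k) v = 0 → (qop f (-lam⁻¹) ^ k) (g v) = 0 := by
  have hn : Complex.normSq lam ≠ 0 := by simpa using hl
  have hsemi : ∀ v, qop f (-lam⁻¹) (g v)
      = g ((Complex.normSq lam)⁻¹ • fi (fi (qop f lam v))) := by
    intro v
    rw [qop_apply, qop_apply, re_neg_inv, normSq_neg_inv]
    simp only [h4, map_neg, map_add, map_sub, LinearMap.map_smul_of_tower, h2, neg_neg]
    match_scalars <;> field_simp
  have hc : Commute (qop f lam) (fi * fi) := by
    ext v
    simp only [Module.End.mul_apply, qop_apply, map_add, map_sub, LinearMap.map_smul_of_tower, h1, h2]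
  intro k
  induction k with
  | zero => intro v hv; simp at hv; simp [hv]
  | succ k ih =>
    intro v hv
    rw [pow_succ, Module.End.mul_apply, hsemi]
    apply ih
    rw [LinearMap.map_smul_of_tower]
    have : (qop f lam ^ k) (fi (fi (qop f lam v))) = 0 := by
      change (qop f lam ^ k * (fi * fi) * qop f lam) v = 0
      rw [(hc.pow_left k).eq, mul_assoc, ← pow_succ, Module.End.mul_apply, hv, map_zero]
    rw [this, smul_zero]

open Polynomial in
/-- The real quadratic polynomial with roots `lam`, `conj lam`. -/
def qpol (lam : ℂ) : ℝ[X] := X ^ 2 - C (2 * lam.re) * X + C (Complex.normSq lam)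

open Polynomial in
lemma qpol_map (lam : ℂ) : (qpol lam).map (algebraMap ℝ ℂ)
    = (X - C lam) * (X - C ((starRingEnd ℂ) lam)) := by
  have h1 : (C ((2 : ℂ) * lam.re) : ℂ[X]) = C lam + C ((starRingEnd ℂ) lam) := by
    rw [← C_add, Complex.add_conj]; simp
  have h2 : (C ((Complex.normSq lam : ℝ) : ℂ) : ℂ[X]) = C lam * C ((starRingEnd ℂ) lam) := by
    rw [← C_mul, Complex.mul_conj]
  simp only [qpol, Polynomial.map_add, Polynomial.map_sub, Polynomial.map_mul, Polynomial.map_pow,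
    map_X, map_C, Complex.coe_algebraMap, Complex.ofReal_mul, Complex.ofReal_ofNat]
  rw [h1, h2]
  ring

lemma qpol_aeval {V : Type u} [AddCommGroup V] [Module HH V] [Module ℝ V]
    [IsScalarTower ℝ HH V] (f : V →ₗ[HH] V) (lam : ℂ) :
    Polynomial.aeval (R := ℝ) (A := Module.End HH V) f (qpol lam) = qop f lam := by
  ext v
  simp [qpol, qop_apply, pow_two]
  module

lemma qpol_coprime (lam : ℂ) (hl : lam ≠ 0) (him : 0 ≤ lam.im) (hI : lam ≠ Complex.I) :
    IsCoprime (qpol lam) (qpol (-lam⁻¹)) := by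
  rw [← Polynomial.isCoprime_map (algebraMap ℝ ℂ), qpol_map, qpol_map]
  have key : ∀ z w : ℂ, z ≠ w → IsCoprime (Polynomial.X - Polynomial.C z)
      (Polynomial.X - Polynomial.C w) := fun z w h =>
    Polynomial.isCoprime_X_sub_C_of_isUnit_sub (by simpa [sub_eq_zero] using h)
  have h1 : lam ≠ -lam⁻¹ := by
    intro h
    have h2 : lam * lam = -1 := by
      nth_rewrite 2 [h]
      field_simp
    have h3 : (lam - Complex.I) * (lam + Complex.I) = 0 := by
      linear_combination h2 - Complex.I_mul_I
    rcases mul_eq_zero.1 h3 with h4 | h4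
    · exact hI (sub_eq_zero.1 h4)
    · rw [eq_neg_of_add_eq_zero_left h4] at him
      simp at him
      linarith
  have h2 : lam ≠ (starRingEnd ℂ) (-lam⁻¹) := by
    intro h
    have h2 : lam * (starRingEnd ℂ) lam = -1 := by
      nth_rewrite 1 [h]
      have : (starRingEnd ℂ) lam ≠ 0 := by simpa using hl
      simp [this]
    rw [Complex.mul_conj] at h2
    have h3 : Complex.normSq lam = -1 := by exact_mod_cast h2
    have := Complex.normSq_nonneg lam
    linarith
  refine IsCoprime.mul_left (IsCoprime.mul_right (key _ _ h1) (key _ _ h2))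
    (IsCoprime.mul_right (key _ _ ?_) (key _ _ ?_))
  · intro h
    apply h2
    rw [← h, Complex.conj_conj]
  · intro h
    exact h1 ((starRingEnd ℂ).injective h)

lemma qop_isCompl {V : Type u} [AddCommGroup V] [Module HH V] [Module ℝ V]
    [IsScalarTower ℝ HH V] (f : V →ₗ[HH] V) (lam mu : ℂ) (hc : IsCoprime (qpol lam) (qpol mu))
    (N : ℕ) (h0 : (qop f lam * qop f mu) ^ N = 0) :
    IsCompl (LinearMap.ker (qop f lam ^ N)) (LinearMap.ker (qop f mu ^ N)) := by
  obtain ⟨a, b, hab⟩ := hc.pow (m := N) (n := N)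
  let E := Polynomial.aeval (R := ℝ) (A := Module.End HH V) f
  have hE : ∀ p q, E p * E q = E q * E p := fun p q => by rw [← map_mul, ← map_mul, mul_comm]
  have e1 : qop f lam ^ N = E (qpol lam ^ N) := by rw [map_pow, qpol_aeval]
  have e2 : qop f mu ^ N = E (qpol mu ^ N) := by rw [map_pow, qpol_aeval]
  have h0' : E (qpol lam ^ N) * E (qpol mu ^ N) = 0 := by
    rw [← map_mul, ← mul_pow, map_pow, map_mul, qpol_aeval, qpol_aeval, h0]
  have hone : E a * E (qpol lam ^ N) + E b * E (qpol mu ^ N) = 1 := by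
    rw [← map_mul, ← map_mul, ← map_add, hab, map_one]
  rw [e1, e2]
  constructor
  · rw [Submodule.disjoint_def]
    intro x hx hy
    have h1 := congrArg (fun T : Module.End HH V => T x) hone
    simp only [LinearMap.add_apply, Module.End.one_apply] at h1
    rw [Module.End.mul_apply, Module.End.mul_apply, LinearMap.mem_ker.1 hx, LinearMap.mem_ker.1 hy,
      map_zero, map_zero, zero_add] at h1
    exact h1.symm
  · rw [codisjoint_iff, eq_top_iff]
    intro v _
    have h1 := congrArg (fun T : Module.End HH V => T v) hone
    simp only [LinearMap.add_apply, Module.End.one_apply] at h1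
    rw [← h1, add_comm]
    refine Submodule.add_mem_sup ?_ ?_
    · rw [LinearMap.mem_ker, ← Module.End.mul_apply, hE b, ← mul_assoc, h0', zero_mul]; rfl
    · rw [LinearMap.mem_ker, ← Module.End.mul_apply, hE a, ← mul_assoc, hE (qpol mu ^ N), h0',
        zero_mul]; rfl

lemma good_jl (ss : List ℕ) (hss : ∀ s ∈ ss, 1 ≤ s) : Good (jl Complex.I ss) := by
  intro b hb
  obtain ⟨s, hs, rfl⟩ := List.mem_map.1 hb
  exact Or.inr ⟨s, hss s hs, rfl⟩

lemma good_pl (lam : ℂ) (hl : lam ≠ 0) (him : 0 ≤ lam.im) (hI : lam ≠ Complex.I)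
    (ss : List ℕ) (hss : ∀ s ∈ ss, 1 ≤ s) : Good (pl lam ss) := by
  intro b hb
  obtain ⟨s, hs, rfl⟩ := List.mem_map.1 hb
  exact Or.inl ⟨s, lam, hss s hs, hl, him, hI, rfl⟩

lemma pair_case {V : Type u} [AddCommGroup V] [Module HH V] [Module.Finite HH V] [Module ℝ V]
    [IsScalarTower ℝ HH V] (f g : V →ₗ[HH] V) (hg : Function.Injective g)
    (h : ∀ v, f (g (f v)) = - g v) (lam : ℂ) (hl : lam ≠ 0) (him : 0 ≤ lam.im) (N : ℕ)
    (h0 : (qop f lam * qop f (-lam⁻¹)) ^ N = 0) :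
    ∃ L, Good L ∧ HasMat C2Hhom f (dsum L).2 := by
  by_cases hI : lam = Complex.I
  · subst hI
    have e : -(Complex.I)⁻¹ = Complex.I := by simp
    rw [e, ← pow_two, ← pow_mul] at h0
    obtain ⟨ss, hss, H⟩ := primary f _ _ h0
    exact ⟨_, good_jl ss hss, H⟩
  obtain ⟨fi, h1, h2, h3, h4⟩ := inv_data f g hg h
  have hcompl := qop_isCompl f _ _ (qpol_coprime lam hl him hI) N h0
  set U1 := LinearMap.ker (qop f lam ^ N) with hU1
  set U2 := LinearMap.ker (qop f (-lam⁻¹) ^ N) with hU2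
  have hcf : ∀ z, Commute (qop f z) (f : Module.End HH V) := fun z => by
    ext v
    simp only [Module.End.mul_apply, qop_apply, map_add, map_sub, LinearMap.map_smul_of_tower]
  have hinv : ∀ z, ∀ x ∈ LinearMap.ker (qop f z ^ N), f x ∈ LinearMap.ker (qop f z ^ N) := by
    intro z x hx
    rw [LinearMap.mem_ker] at hx ⊢
    have := congrArg (fun T : Module.End HH V => T x) ((hcf z).pow_left N).eq
    simp only [Module.End.mul_apply, hx, map_zero] at this
    exact this
  have hf1 : ∀ x ∈ U1, f x ∈ U1 := hinv _
  have hf2 : ∀ x ∈ U2, f x ∈ U2 := hinv _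
  have hg1 : ∀ x ∈ U1, g x ∈ U2 := fun x hx => g_ker f fi g h1 h2 h4 lam hl N x hx
  have hmu : -(-lam⁻¹)⁻¹ = lam := by rw [inv_neg, inv_inv, neg_neg]
  have hl' : -lam⁻¹ ≠ 0 := by simpa using hl
  have hg2 : ∀ x ∈ U2, g x ∈ U1 := fun x hx => by
    have := g_ker f fi g h1 h2 h4 (-lam⁻¹) hl' N x hx
    rwa [hmu] at this
  have hi1 : Function.Injective (g.restrict hg1) := fun x y hxy =>
    Subtype.ext (hg (congrArg Subtype.val hxy))
  have hi2 : Function.Injective (g.restrict hg2) := fun x y hxy =>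
    Subtype.ext (hg (congrArg Subtype.val hxy))
  have hdim : finrank HH U1 = finrank HH U2 :=
    le_antisymm (LinearMap.finrank_le_finrank_of_injective hi1)
      (LinearMap.finrank_le_finrank_of_injective hi2)
  let ge : U1 ≃ₗ[HH] U2 := LinearEquiv.ofInjectiveOfFinrankEq (g.restrict hg1) hi1 hdim
  have hge : ∀ x, ((ge x : U2) : V) = g x := fun x => rfl
  have hp1 : qop (f.restrict hf1) lam ^ N = 0 := by
    ext x
    rw [qop_restrict_pow]
    exact x.2
  obtain ⟨ss, hss, H⟩ := primary (f.restrict hf1) lam N hp1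
  have R := NRel_dsum_jl (-lam⁻¹) hl' ss
  rw [hmu] at R
  have K : HasMat C2Hhom (f.restrict hf2) (dsum (jl (-lam⁻¹) ss)).2 := by
    refine H.transfer R ge ?_
    intro v
    apply Subtype.ext
    rw [LinearMap.coe_restrict_apply, hge, LinearMap.coe_restrict_apply, h]
    rfl
  exact ⟨_, good_pl lam hl him hI ss hss, (HasMat.blocks hcompl hf1 hf2 H K).of_RE (dsum_pl lam ss)⟩

lemma exists_eig {V : Type u} [AddCommGroup V] [Module HH V] [Module.Finite HH V] [Module ℝ V]
    [IsScalarTower ℝ HH V] [Nontrivial V] (f : V →ₗ[HH] V) :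
    ∃ lam : ℂ, 0 ≤ lam.im ∧ ∃ v : V, v ≠ 0 ∧ qop f lam v = 0 := by
  let _ : Module ℂ V := Module.compHom V C2Hhom
  have hz : ∀ (z : ℂ) (v : V), z • v = C2H z • v := fun z v => rfl
  have hfin1 : Module.Finite ℝ V := Module.Finite.trans HH V
  have hr : ∀ (r : ℝ) (v : V), (r : ℂ) • v = r • v := fun r v => by rw [hz, C2H_real_smul]
  have hst : IsScalarTower ℝ ℂ V := ⟨fun r z v => by
    rw [← hr, smul_smul]; rfl⟩
  have hfin : Module.Finite ℂ V := Module.Finite.of_restrictScalars_finite ℝ ℂ V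
  let F : Module.End ℂ V :=
    { toFun := f, map_add' := map_add f, map_smul' := fun z v => by simp [hz] }
  have hF : ∀ v, F v = f v := fun v => rfl
  obtain ⟨z, hzz⟩ := Module.End.exists_eigenvalue F
  obtain ⟨v, hv⟩ := hzz.exists_hasEigenvector
  have hv0 : v ≠ 0 := hv.2
  have hv1 : F v = z • v := hv.apply_eq_smul
  have hq : qop f z v = 0 := by
    rw [qop_apply, ← hF, ← hF, hv1, map_smul, hv1, ← hr, ← hr, ← Complex.mul_conj]
    have : ((2 * z.re : ℝ) : ℂ) = z + (starRingEnd ℂ) z := by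
      rw [Complex.add_conj]
    rw [this]
    module
  by_cases him : 0 ≤ z.im
  · exact ⟨z, him, v, hv0, hq⟩
  · refine ⟨(starRingEnd ℂ) z, ?_, v, hv0, ?_⟩
    · simp; linarith
    · rw [qop_apply] at hq ⊢
      simpa using hq

lemma decomp : ∀ (d : ℕ) (V : Type u) [AddCommGroup V] [Module HH V] [Module.Finite HH V]
    [Module ℝ V] [IsScalarTower ℝ HH V] (f g : V →ₗ[HH] V), finrank HH V = d →
    Function.Injective g → (∀ v, f (g (f v)) = - g v) →
    ∃ L, Good L ∧ HasMat C2Hhom f (dsum L).2 := by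
  intro d
  induction d using Nat.strong_induction_on with
  | _ d ih =>
  intro V _ _ _ _ _ f g hd hg h
  rcases subsingleton_or_nontrivial V with hV | hV
  · refine ⟨[], by intro b hb; simp at hb, ?_⟩
    let b : Basis (Fin 0) HH V := Basis.empty V
    exact ⟨b, fun k => k.elim0⟩
  obtain ⟨fi, h1, h2, h3, h4⟩ := inv_data f g hg h
  obtain ⟨lam, him, v, hv, hqv⟩ := exists_eig f
  have hl : lam ≠ 0 := by
    rintro rfl
    rw [qop_apply] at hqv
    simp only [Complex.zero_re, mul_zero, zero_smul, sub_zero, map_zero, add_zero] at hqv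
    apply hv
    rw [← h2 v, ← h2 (f v), hqv, map_zero, map_zero]
  have hn : Complex.normSq lam ≠ 0 := by simpa using hl
  let t : Module.End HH V := f - fi
  have ht : ∀ v, t v = f v - fi v := fun v => rfl
  let α : ℝ := 2 * lam.re - 2 * lam.re * (Complex.normSq lam)⁻¹
  let β : ℝ := Complex.normSq lam + (Complex.normSq lam)⁻¹
    - (2 * lam.re) * (2 * lam.re) * (Complex.normSq lam)⁻¹ + 2
  let Q : Module.End HH V := t * t - α • t + β • 1
  have hQ : ∀ v, Q v = t (t v) - α • t v + β • v := fun v => rfl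
  have hQf : Commute Q (f : Module.End HH V) := by
    ext v
    simp only [Module.End.mul_apply, hQ, ht, map_add, map_sub, LinearMap.map_smul_of_tower, h1, h2]
  have hQg : Commute Q (g : Module.End HH V) := by
    ext v
    simp only [Module.End.mul_apply, hQ, ht, map_add, map_sub, LinearMap.map_smul_of_tower, h4, h3,
      map_neg, neg_neg]
    have h5 : ∀ v, fi (g v) = - g (f v) := fun v => by rw [h3, neg_neg]
    simp only [h5, map_neg, neg_neg, h1, h2, h4]
    module
  have hid : ∀ v, qop f lam (qop f (-lam⁻¹) v) = Q (f (f v)) := by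
    intro v
    simp only [qop_apply, hQ, ht, re_neg_inv, normSq_neg_inv, map_add, map_sub,
      LinearMap.map_smul_of_tower, h2, α, β]
    match_scalars <;> field_simp <;> ring
  have hid' : qop f lam * qop f (-lam⁻¹) = Q * (f * f : Module.End HH V) := by
    ext v; exact hid v
  obtain ⟨N, hcompl, hN⟩ := ((LinearMap.eventually_isCompl_ker_pow_range_pow Q).and
    (Filter.eventually_ge_atTop 1)).exists
  set U := LinearMap.ker (Q ^ N) with hU
  set R := LinearMap.range (Q ^ N) with hR
  have hkU : ∀ w : Module.End HH V, Commute Q w → ∀ x ∈ U, w x ∈ U := by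
    intro w hw x hx
    rw [hU, LinearMap.mem_ker] at hx ⊢
    have := congrArg (fun T : Module.End HH V => T x) (hw.pow_left N).eq
    simp only [Module.End.mul_apply, hx, map_zero] at this
    exact this
  have hkR : ∀ w : Module.End HH V, Commute Q w → ∀ x ∈ R, w x ∈ R := by
    rintro w hw x ⟨y, rfl⟩
    refine ⟨w y, ?_⟩
    have := congrArg (fun T : Module.End HH V => T y) (hw.pow_left N).eq
    simpa only [Module.End.mul_apply] using this
  have hfU := hkU f hQf
  have hgU := hkU g hQg
  have hfR := hkR f hQf
  have hgR := hkR g hQg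
  have hQv : Q (f (f v)) = 0 := by
    have hc : qop f lam (qop f (-lam⁻¹) v) = qop f (-lam⁻¹) (qop f lam v) := by
      simp only [qop_apply, map_add, map_sub, LinearMap.map_smul_of_tower]
      module
    rw [← hid, hc, hqv, map_zero]
  have hvU : f (f v) ∈ U := by
    obtain ⟨M, rfl⟩ := Nat.exists_eq_add_of_le' hN
    rw [hU, LinearMap.mem_ker, pow_succ, Module.End.mul_apply, hQv, map_zero]
  have hv' : f (f v) ≠ 0 := by
    intro h0
    apply hv
    rw [← h2 v, ← h2 (f v), h0, map_zero, map_zero]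
  have hUpos : 0 < finrank HH U := by
    have : Nontrivial U := ⟨⟨f (f v), hvU⟩, 0, fun h0 => hv' (congrArg Subtype.val h0)⟩
    exact Module.finrank_pos
  have hRlt : finrank HH R < d := by
    have := Submodule.finrank_add_eq_of_isCompl hcompl
    omega
  obtain ⟨L₂, hL₂, H₂⟩ := ih _ hRlt R (f.restrict hfR) (g.restrict hgR) rfl
    (fun x y hxy => Subtype.ext (hg (congrArg Subtype.val hxy)))
    (fun x => Subtype.ext (h x))
  have hU0 : (qop (f.restrict hfU) lam * qop (f.restrict hfU) (-lam⁻¹)) ^ N = 0 := by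
    have e : ∀ (k : ℕ) (x : U), (((qop (f.restrict hfU) lam * qop (f.restrict hfU) (-lam⁻¹)) ^ k) x : V)
        = ((Q * (f * f : Module.End HH V)) ^ k) x := by
      intro k
      induction k with
      | zero => intro x; rfl
      | succ k ihk =>
        intro x
        rw [pow_succ, Module.End.mul_apply _ (_ * _), ihk, pow_succ, Module.End.mul_apply _ (_ * _), ← hid']
        rfl
    ext x
    rw [e, (hQf.mul_right hQf).mul_pow, ((hQf.mul_right hQf).pow_pow N N).eq, Module.End.mul_apply]
    have hx : (Q ^ N) (x : V) = 0 := x.2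
    rw [hx, map_zero]
    rfl
  obtain ⟨L₁, hL₁, H₁⟩ := pair_case (f.restrict hfU) (g.restrict hgU)
    (fun x y hxy => Subtype.ext (hg (congrArg Subtype.val hxy)))
    (fun x => Subtype.ext (h x)) lam hl him N hU0
  refine ⟨L₁ ++ L₂, ?_, (HasMat.blocks hcompl hfU hfR H₁ H₂).of_RE (dsum_append L₁ L₂)⟩
  intro b hb
  rcases List.mem_append.1 hb with hb | hb
  · exact hL₁ b hb
  · exact hL₂ b hb

end Decomp
/-- `A ∈ SL(n, ℍ)` satisfies `g A g⁻¹ = -A⁻¹` for some `g ∈ SL(n, ℍ)` if and only if `A` is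
conjugate in `GL(n, ℍ)` to a direct sum of pairs `J(λ, s) ⊕ J(-λ⁻¹, s)` (`λ ≠ 0`, `Im λ ≥ 0`,
`λ ≠ i`) and single blocks `J(i, t)`. -/
theorem conj_to_neg_inv_iff_jordan (n : ℕ) (A : (Matrix (Fin n) (Fin n) (Quaternion ℝ))ˣ)
    (hA : qdet A.val = 1) :
    (∃ g : (Matrix (Fin n) (Fin n) (Quaternion ℝ))ˣ, qdet g.val = 1 ∧ g * A * g⁻¹ = -A⁻¹) ↔
      ∃ L : List ((m : ℕ) × Matrix (Fin m) (Fin m) ℂ),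
        (∀ b ∈ L,
          (∃ (s : ℕ) (lam : ℂ), 1 ≤ s ∧ lam ≠ 0 ∧ 0 ≤ lam.im ∧ lam ≠ Complex.I ∧
            b = ⟨s + s, Matrix.reindex finSumFinEquiv finSumFinEquiv
                  (Matrix.fromBlocks (jordanC lam s) 0 0 (jordanC (-lam⁻¹) s))⟩) ∨
          (∃ t : ℕ, 1 ≤ t ∧ b = ⟨t, jordanC Complex.I t⟩)) ∧
        ∃ (e : Fin (dsum L).1 ≃ Fin n) (S : (Matrix (Fin n) (Fin n) (Quaternion ℝ))ˣ),
          S.val * A.val * (S⁻¹).val = (Matrix.reindex e e (dsum L).2).map C2H := by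
  constructor
  · rintro ⟨g, _, hg⟩
    have hg0 : g * A = -A⁻¹ * g := by rw [← hg]; group
    have h1 : A * g * A = -g := by rw [mul_assoc, hg0]; simp
    have h1' : A.val * g.val * A.val = -g.val := by
      have := congrArg Units.val h1
      simpa using this
    let f : (Fin n → HH) →ₗ[HH] (Fin n → HH) := Matrix.toLinearMapRight' A.val
    let γ : (Fin n → HH) →ₗ[HH] (Fin n → HH) := Matrix.toLinearMapRight' g.val
    have hf : ∀ v, f v = v ᵥ* A.val := fun v => rfl
    have hγ : ∀ v, γ v = v ᵥ* g.val := fun v => rfl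
    have hinj : Function.Injective γ := by
      intro x y hxy
      rw [hγ, hγ] at hxy
      have := congrArg (fun v => v ᵥ* (g⁻¹).val) hxy
      simpa [Matrix.vecMul_vecMul] using this
    obtain ⟨L, hL, b, hb⟩ := decomp _ (Fin n → HH) f γ rfl hinj (fun v => by
      rw [hf, hγ, hf, hγ, Matrix.vecMul_vecMul, Matrix.vecMul_vecMul, ← mul_assoc, h1',
        Matrix.vecMul_neg])
    refine ⟨L, hL, ?_⟩
    let e : Fin (dsum L).1 ≃ Fin n := b.indexEquiv (Pi.basisFun HH (Fin n))
    let c := b.reindex e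
    let S : Matrix (Fin n) (Fin n) HH := Matrix.of fun k => c k
    let T : Matrix (Fin n) (Fin n) HH := Matrix.of fun k l => c.repr (Pi.single k 1) l
    have hS : ∀ x : Fin n → HH, x ᵥ* S = ∑ k, x k • c k := by
      intro x
      funext l
      simp [Matrix.vecMul, dotProduct, S]
    have hTS : T * S = 1 := by
      refine Matrix.ext fun k l => ?_
      have h2 : (T * S) k = T k ᵥ* S := rfl
      rw [h2, hS]
      have h3 := c.sum_repr (Pi.single k 1)
      have h4 : ∑ j, T k j • c j = Pi.single k 1 := h3
      rw [h4, Matrix.one_apply, Pi.single_apply]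
      simp [eq_comm]
    have hST : S * T = 1 := by
      have h2 : ∀ x y : Fin n → HH, x ᵥ* S = y ᵥ* S → x = y := by
        intro x y hxy
        rw [hS, hS] at hxy
        have h3 := Fintype.linearIndependent_iff.1 c.linearIndependent (x - y) (by
          simp [sub_smul, Finset.sum_sub_distrib, hxy])
        funext k
        exact sub_eq_zero.1 (h3 k)
      funext k
      apply h2
      change (S * T * S) k = ((1 : Matrix (Fin n) (Fin n) HH) * S) k
      rw [mul_assoc, hTS, mul_one, one_mul]
    let Su : (Matrix (Fin n) (Fin n) HH)ˣ := ⟨S, T, hST, hTS⟩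
    have hSA : S * A.val = (Matrix.reindex e e (dsum L).2).map C2H * S := by
      funext k
      change f (c k) = ((Matrix.reindex e e (dsum L).2).map C2H) k ᵥ* S
      rw [hS, Module.Basis.reindex_apply, hb, ← Equiv.sum_comp e]
      simp [c, C2Hhom_apply]
    refine ⟨e, Su, ?_⟩
    change S * A.val * T = _
    rw [hSA, mul_assoc, hST, mul_one]
  · rintro ⟨L, hL, e, S, hS⟩
    exact backward n A L hL e S hS
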